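/- arXiv:2304.09124 — 2 statements merged into one kernel-verified Lean document; each statement's English description precedes it below -/
import Mathlib

section
/- Let A be a unital ℂ-algebra and let p, q ∈ A be idempotents. Set R = R(p,q) and consider the ⊛-product R ⊛ R ∈ M₄(A ⊗_ℂ A). Then: (1) R_{12} = 0, so the monomial x₁₂ vanishes on R; (2) (R ⊛ R)_{12} = (1−p) ⊗ q, and if p ≠ 1 and q ≠ 0 then (R ⊛ R)_{12} ≠ 0, so x₁₂ does not vanish on R ⊛ R; (3) (R ⊛ R)_{12} · (R ⊛ R)_{24} = 0, so the monomial x₁₂·x₂₄ vanishes on R ⊛ R. -/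
open scoped TensorProduct

/-- The matrix `R(p,q)` with rows `(p, 0, 1−p, 0)`, `(1−p, 0, p, 0)`, `(0, q, 0, 1−q)`,
`(0, 1−q, 0, q)`. -/
def Rmat {A : Type*} [Ring A] (p q : A) : Matrix (Fin 4) (Fin 4) A :=
  !![p, 0, 1 - p, 0;
     1 - p, 0, p, 0;
     0, q, 0, 1 - q;
     0, 1 - q, 0, q]

/-- The `⊛`-product of two matrices, with `(M₁ ⊛ M₂) i j = ∑ k, M₁ i k ⊗ M₂ k j`. -/
noncomputable def starProd {n : ℕ} {A₁ A₂ : Type*} [Ring A₁] [Ring A₂]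
    [Algebra ℂ A₁] [Algebra ℂ A₂]
    (M₁ : Matrix (Fin n) (Fin n) A₁) (M₂ : Matrix (Fin n) (Fin n) A₂) :
    Matrix (Fin n) (Fin n) (A₁ ⊗[ℂ] A₂) :=
  fun i j => ∑ k, M₁ i k ⊗ₜ[ℂ] M₂ k j

/-- For idempotents `p`, `q` in a unital `ℂ`-algebra `A`, with
`R = R(p,q)`: (1) the `(1,2)` entry of `R` is zero; (2) the `(1,2)` entry of `R ⊛ R` is
`(1−p) ⊗ q`, which is nonzero whenever `p ≠ 1` and `q ≠ 0`; (3) the product of the `(1,2)`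
and `(2,4)` entries of `R ⊛ R` is zero. -/
theorem Rmat_separating_polynomials {A : Type*} [Ring A] [Algebra ℂ A] (p q : A)
    (hp : p * p = p) (hq : q * q = q) :
    Rmat p q 0 1 = 0 ∧
    starProd (Rmat p q) (Rmat p q) 0 1 = (1 - p) ⊗ₜ[ℂ] q ∧
    (p ≠ 1 → q ≠ 0 → starProd (Rmat p q) (Rmat p q) 0 1 ≠ 0) ∧
    starProd (Rmat p q) (Rmat p q) 0 1 * starProd (Rmat p q) (Rmat p q) 1 3 = 0 := by
  have h1 : starProd (Rmat p q) (Rmat p q) 0 1 = (1 - p) ⊗ₜ[ℂ] q := by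
    simp [starProd, Rmat, Fin.sum_univ_four]
  have h2 : starProd (Rmat p q) (Rmat p q) 1 3 = p ⊗ₜ[ℂ] (1 - q) := by
    simp [starProd, Rmat, Fin.sum_univ_four]
  refine ⟨by simp [Rmat], h1, ?_, ?_⟩
  · intro hp1 hq0 h
    rw [h1] at h
    have hp' : (1 - p) ≠ 0 := fun h' => hp1 (sub_eq_zero.mp h').symm
    obtain ⟨f, hf⟩ : ∃ f : Module.Dual ℂ A, f (1 - p) ≠ 0 := by
      by_contra! hc
      exact hp' ((Module.forall_dual_apply_eq_zero_iff ℂ _).mp hc)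
    obtain ⟨g, hg⟩ : ∃ g : Module.Dual ℂ A, g q ≠ 0 := by
      by_contra! hc
      exact hq0 ((Module.forall_dual_apply_eq_zero_iff ℂ _).mp hc)
    have h3 := congrArg (TensorProduct.lift ((LinearMap.mul ℂ ℂ).compl₁₂ f g)) h
    rw [TensorProduct.lift.tmul, map_zero] at h3
    exact mul_ne_zero hf hg h3
  · rw [h1, h2, Algebra.TensorProduct.tmul_mul_tmul, sub_mul, one_mul, hp, sub_self,
      TensorProduct.zero_tmul]
end

section
/- For every permutation σ of {1, 2, 3, 4} there exist scalars p₁, q₁, p₂, q₂, p₃, q₃ ∈ {0, 1} ⊆ ℂ such that the matrix product R(p₁,q₁)·R(p₂,q₂)·R(p₃,q₃) ∈ M₄(ℂ) equals the permutation matrix of σ. In particular, evaluating the entries of the iterated ⊛-product R^{⊛3} at characters sending the projections of each tensor leg to 0 or 1 produces all 24 permutation matrices in M₄(ℂ). -/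
/-- The permutation whose matrix is `R(p,q)` for `p, q ∈ {0,1}`, as the map sending column to row. -/
def rowOf (p q : Bool) : Fin 4 → Fin 4 :=
  ![bif p then 0 else 1, bif q then 2 else 3, bif p then 1 else 0, bif q then 3 else 2]

/-- The matrix of a self-map of `Fin 4`. -/
def mapMat (f : Fin 4 → Fin 4) : Matrix (Fin 4) (Fin 4) ℂ :=
  Matrix.of (fun i j => if i = f j then (1 : ℂ) else 0)

theorem mapMat_mul (f g : Fin 4 → Fin 4) : mapMat f * mapMat g = mapMat (f ∘ g) := by
  ext i j
  simp [mapMat, Matrix.mul_apply]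

theorem Rmat_eq_mapMat (p q : Bool) :
    Rmat (bif p then (1 : ℂ) else 0) (bif q then (1 : ℂ) else 0) = mapMat (rowOf p q) := by
  ext i j
  cases p <;> cases q <;> fin_cases i <;> fin_cases j <;> simp [Rmat, mapMat, rowOf]

theorem bit_mem (p : Bool) : (bif p then (1 : ℂ) else 0) ∈ ({0, 1} : Set ℂ) := by
  cases p <;> simp

set_option maxRecDepth 100000 in
theorem exists_bits : ∀ σ : Equiv.Perm (Fin 4), ∃ p₁ q₁ p₂ q₂ p₃ q₃ : Bool,
    ∀ j, rowOf p₁ q₁ (rowOf p₂ q₂ (rowOf p₃ q₃ j)) = σ j := by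
  decide +kernel

/-- Every permutation matrix in `M₄(ℂ)` arises as a product
`R(p₁,q₁) · R(p₂,q₂) · R(p₃,q₃)` for suitable scalars `p₁, q₁, p₂, q₂, p₃, q₃ ∈ {0, 1}`. -/
theorem Rmat_products_give_all_permutation_matrices (σ : Equiv.Perm (Fin 4)) :
    ∃ p₁ q₁ p₂ q₂ p₃ q₃ : ℂ,
      p₁ ∈ ({0, 1} : Set ℂ) ∧ q₁ ∈ ({0, 1} : Set ℂ) ∧
      p₂ ∈ ({0, 1} : Set ℂ) ∧ q₂ ∈ ({0, 1} : Set ℂ) ∧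
      p₃ ∈ ({0, 1} : Set ℂ) ∧ q₃ ∈ ({0, 1} : Set ℂ) ∧
      Rmat p₁ q₁ * Rmat p₂ q₂ * Rmat p₃ q₃ =
        Matrix.of (fun i j => if i = σ j then (1 : ℂ) else 0) := by
  obtain ⟨p₁, q₁, p₂, q₂, p₃, q₃, h⟩ := exists_bits σ
  refine ⟨_, _, _, _, _, _, bit_mem p₁, bit_mem q₁, bit_mem p₂, bit_mem q₂, bit_mem p₃,
    bit_mem q₃, ?_⟩
  rw [Rmat_eq_mapMat, Rmat_eq_mapMat, Rmat_eq_mapMat, mapMat_mul, mapMat_mul]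
  have h2 : (rowOf p₁ q₁ ∘ rowOf p₂ q₂) ∘ rowOf p₃ q₃ = σ := funext h
  rw [h2, mapMat]
end
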